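/- Suppose Γ is additively closed. Then (Γ, π) has property B if and only if π and all elements of Γ are algebraic over K. -/

import Mathlib

/-!
Common setup: `Kv` is a complete field equipped with a (normalized, `ℤ`-valued)
valuation `Valued.v : Kv → ℤₘ₀ = WithZero (Multiplicative ℤ)`, and `K` is a dense
subfield of `Kv` (so that `Kv` is the completion `K_v` of `K`).  The valuation is
written multiplicatively: the additive valuation of `x` is `n` iff
`Valued.v x = ofAdd (-n)`; the valuation ring `A_v` is `{x | Valued.v x ≤ 1}` and
`π A_v = {x | Valued.v x ≤ Valued.v π}`.
-/

open scoped Multiplicative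

/-- The multiplicative value monoid `ℤₘ₀` for normalized `ℤ`-valued valuations. -/
abbrev ZM0 : Type := WithZero (Multiplicative ℤ)

/-- A sequence `b : ℕ → α` is `k`-automatic if its `k`-kernel
`{ (b (n k^i + j))_n : i ≥ 0, 0 ≤ j < k^i }` is finite. -/
def IsKAutomatic {α : Type*} (k : ℕ) (b : ℕ → α) : Prop :=
  {c : ℕ → α | ∃ i j : ℕ, j < k ^ i ∧ c = fun n => b (n * k ^ i + j)}.Finite

/-- The sequence `{a n}_{n ≥ m}` is ultimately periodic: there are `N ≥ m` and
`L > 0` with `a (n + L) = a n` for all `n ≥ N`. -/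
def UltimatelyPeriodic {α : Type*} (m : ℤ) (a : ℤ → α) : Prop :=
  ∃ N L : ℤ, m ≤ N ∧ 0 < L ∧ ∀ n : ℤ, N ≤ n → a (n + L) = a n

variable {Kv : Type*} [Field Kv] [Valued Kv ZM0]

/-- `x = ∑_{n ≥ m} a_n π^n` is the expansion of `x` with respect to `(Γ, π)`:
all digits `a n` for `n ≥ m` lie in `Γ` and the series converges to `x`. -/
def IsExpansion (π : Kv) (Γ : Set Kv) (m : ℤ) (a : ℤ → Kv) (x : Kv) : Prop :=
  (∀ n : ℤ, m ≤ n → a n ∈ Γ) ∧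
    HasSum (fun n : ℕ => a (m + n) * π ^ (m + (n : ℤ))) x

/-- `Γ ⊆ A_v` is a complete set of representatives of `A_v / π A_v`: reduction
modulo `π A_v` maps `Γ` bijectively onto `A_v / π A_v`. -/
def IsCompleteSetOfReps (π : Kv) (Γ : Set Kv) : Prop :=
  (∀ γ ∈ Γ, Valued.v γ ≤ 1) ∧
    ∀ x : Kv, Valued.v x ≤ 1 → ∃! γ, γ ∈ Γ ∧ Valued.v (x - γ) ≤ Valued.v π

/-- `(Γ, π)` has property A: for every `x ∈ K_v`, `x` is rational (i.e. `x ∈ K`)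
iff the digit sequence of the expansion of `x` w.r.t. `(Γ, π)` is ultimately
periodic. -/
def HasPropertyA (K : Subfield Kv) (π : Kv) (Γ : Set Kv) : Prop :=
  ∀ (x : Kv) (m : ℤ) (a : ℤ → Kv), IsExpansion π Γ m a x →
    (x ∈ K ↔ UltimatelyPeriodic m a)

/-- `(Γ, π)` has property B: for every `x ∈ K_v`, `x` is algebraic over `K` iff
the digit sequence of the expansion of `x` w.r.t. `(Γ, π)` is `p`-automatic. -/
def HasPropertyB (p : ℕ) (K : Subfield Kv) (π : Kv) (Γ : Set Kv) : Prop :=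
  ∀ (x : Kv) (m : ℤ) (a : ℤ → Kv), IsExpansion π Γ m a x →
    (IsAlgebraic ↥K x ↔ IsKAutomatic p fun n : ℕ => a (m + n))

/-- The degree `[S : F]` of a subset `S ⊆ Kv` over a subfield `F ⊆ Kv` (intended
for `F ⊆ S` with `S` a field): the rank of the `F`-span of `S` in `Kv`. -/
noncomputable def degOver (F : Subfield Kv) (S : Set Kv) : Cardinal :=
  Module.rank ↥F ↥(Submodule.span ↥F S)

/-- `Kv` is the completion of a global function field `K` of characteristic `p`
with respect to a normalized nontrivial valuation:  `Kv` has characteristic `p`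
and is complete, `K` is dense in `Kv`, the valuation takes every value `ofAdd n`
(`n ∈ ℤ`) on `K` (normalization/nontriviality), and `K` contains an element `x₀`
transcendental over the prime field `𝔽_p = ⊥` with `[K : 𝔽_p(x₀)] < ∞`. -/
structure IsGlobalFunctionFieldCompletion (p : ℕ) (K : Subfield Kv) : Prop where
  charP : CharP Kv p
  complete : CompleteSpace Kv
  dense : Dense (K : Set Kv)
  normalized : ∀ n : ℤ, ∃ x ∈ K,
    Valued.v x = ((Multiplicative.ofAdd n : Multiplicative ℤ) : ZM0)
  globalFunctionField : ∃ x₀ ∈ K, Transcendental (⊥ : Subfield Kv) x₀ ∧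
    degOver (Subfield.closure {x₀}) (K : Set Kv) < Cardinal.aleph0

/-- The constant field `𝔽_q` of `K`: the algebraic closure of `𝔽_p` in `K`,
i.e. the elements of `K` fixed by some positive power of the Frobenius. -/
def ConstantField (p : ℕ) (K : Subfield Kv) : Set Kv :=
  {x : Kv | x ∈ K ∧ ∃ n : ℕ, 0 < n ∧ x ^ p ^ n = x}

/-- The subfield `𝔽_q(π)` of `Kv` generated by `π` over the constant field. -/
def FqPi (p : ℕ) (K : Subfield Kv) (π : Kv) : Subfield Kv :=
  Subfield.closure (ConstantField p K ∪ {π})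

/-- `𝔽_q((π))`: the completion of `𝔽_q(π)`, i.e. its closure in `Kv`. -/
noncomputable def FqPiCompletion (p : ℕ) (K : Subfield Kv) (π : Kv) : Subfield Kv :=
  (FqPi p K π).topologicalClosure

/-!
Let `M = 𝔽_p((π)) ⊆ K_v`. Digit systems closed under addition are `𝔽_p`-vector spaces, and an
`𝔽_p`-basis `e` of `Γ` is an `M`-basis of `K_v`: the coordinates of `∑ aₙ πⁿ` are the power series
formed from the coordinates of the digits. For `p`-automatic digits the indicator series of the
kernel sequences span a finite-dimensional space stable under taking Frobenius components, so the
sum is algebraic once `π` and `Γ` are.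

Conversely, Christol's theorem for `𝔽_p⟦X⟧` makes the digits automatic as soon as the coordinates of
an algebraic `x` are algebraic. To see this, let `L` be the algebraic closure of `𝔽_p(π)` in `K_v`
and `M₀ = M ∩ L`. Then `[L : M₀] ≤ [K_v : M]`: minimal polynomials over `M₀` stay irreducible over
`M`, which bounds the separable degree through primitive elements, and the inseparable degree is
controlled by `[L : L ^ p ^ m] ≤ p ^ m`. Since the `e i` are algebraic and independent over `M`,
they form an `M₀`-basis of `L`.
-/

section Cartier

open PowerSeries Polynomial Finset

/-- The Cartier operator `∑ aₙ Xⁿ ↦ ∑ a_{pn+j} Xⁿ`; over `ZMod p` it splits a series into its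
`p`-th power components, and on coefficients its iterates produce the `p`-kernel. -/
noncomputable def cartier {R : Type*} [Semiring R] (p j : ℕ) : R⟦X⟧ →ₗ[R] R⟦X⟧ where
  toFun f := PowerSeries.mk fun n => PowerSeries.coeff (p * n + j) f
  map_add' f g := by ext n; simp
  map_smul' c f := by ext n; simp

@[simp]
lemma coeff_cartier {R : Type*} [Semiring R] (p j n : ℕ) (f : R⟦X⟧) :
    PowerSeries.coeff n (cartier p j f) = PowerSeries.coeff (p * n + j) f := by
  simp [cartier]

lemma exists_coe_eq_cartier {R : Type*} [Semiring R] {p : ℕ} (hp : 0 < p) (j D : ℕ) {f : R[X]}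
    (hf : f.natDegree ≤ p * D) :
    ∃ g : R[X], g.natDegree ≤ D ∧ (g : R⟦X⟧) = cartier p j (f : R⟦X⟧) := by
  refine ⟨trunc (D + 1) (cartier p j (f : R⟦X⟧)), Nat.lt_succ_iff.1 (natDegree_trunc_lt _ D), ?_⟩
  ext n
  rw [Polynomial.coeff_coe, coeff_trunc]
  split_ifs with hn
  · rfl
  · rw [coeff_cartier, Polynomial.coeff_coe, coeff_eq_zero_of_natDegree_lt]
    nlinarith

lemma mk_coeff_mul_pow_add_mem {R : Type*} [Semiring R] {p : ℕ} (hp : 0 < p) {T : Set R⟦X⟧}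
    (hT : ∀ f ∈ T, ∀ j < p, cartier p j f ∈ T) {f : R⟦X⟧} (hf : f ∈ T) {i j : ℕ}
    (hj : j < p ^ i) :
    (PowerSeries.mk fun n => PowerSeries.coeff (n * p ^ i + j) f) ∈ T := by
  induction i generalizing j with
  | zero =>
    obtain rfl : j = 0 := by simpa using hj
    convert hf using 1
    ext n
    simp
  | succ i ih =>
    have hpi : 0 < p ^ i := pow_pos hp i
    have hquot : j / p ^ i < p := by
      rwa [Nat.div_lt_iff_lt_mul hpi, mul_comm, ← pow_succ]
    convert hT _ (ih (Nat.mod_lt j hpi)) _ hquot using 1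
    ext n
    simp only [coeff_cartier, coeff_mk]
    congr 2
    calc n * p ^ (i + 1) + j = n * p ^ (i + 1) + (j % p ^ i + p ^ i * (j / p ^ i)) := by
          rw [Nat.mod_add_div]
      _ = (p * n + j / p ^ i) * p ^ i + j % p ^ i := by ring

lemma isKAutomatic_coeff_of_mem_finite {R : Type*} [Semiring R] {p : ℕ} (hp : 0 < p)
    {T : Set R⟦X⟧} (hfin : T.Finite) (hT : ∀ f ∈ T, ∀ j < p, cartier p j f ∈ T) {f : R⟦X⟧}
    (hf : f ∈ T) : IsKAutomatic p fun n => PowerSeries.coeff n f := by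
  refine (hfin.image fun g n => PowerSeries.coeff n g).subset ?_
  rintro _ ⟨i, j, hj, rfl⟩
  exact ⟨_, mk_coeff_mul_pow_add_mem hp hT hf hj, by ext n; simp⟩

variable {p : ℕ} [hp : Fact p.Prime]

lemma coeff_pow_char (f : (ZMod p)⟦X⟧) (n : ℕ) :
    PowerSeries.coeff n (f ^ p) = if p ∣ n then PowerSeries.coeff (n / p) f else 0 := by
  have hexpand : f ^ p = f.expand p hp.out.ne_zero := by
    have := MvPowerSeries.map_frobenius_expand p hp.out.ne_zero (f := f)
    rw [ZMod.frobenius_zmod, MvPowerSeries.map_id] at this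
    exact this.symm
  rw [hexpand, PowerSeries.coeff_expand]

lemma cartier_X_pow_mul_pow_char {i j : ℕ} (hi : i < p) (hj : j < p) (f : (ZMod p)⟦X⟧) :
    cartier p j (PowerSeries.X ^ i * f ^ p) = if i = j then f else 0 := by
  ext n
  rw [coeff_cartier, PowerSeries.coeff_X_pow_mul', coeff_pow_char]
  rcases eq_or_ne i j with rfl | hij
  · simp [hp.out.pos]
  · have hndvd : i ≤ p * n + j → ¬ p ∣ p * n + j - i := by
      rintro hle ⟨c, hc⟩
      have hmod : (p * n + j) % p = (p * c + i) % p := by congr 1; omega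
      rw [Nat.mul_add_mod, Nat.mul_add_mod, Nat.mod_eq_of_lt hi, Nat.mod_eq_of_lt hj] at hmod
      exact hij hmod.symm
    split_ifs with hle hdvd <;> first | exact absurd hdvd (hndvd hle) | simp

lemma eq_sum_X_pow_mul_cartier_pow (f : (ZMod p)⟦X⟧) :
    f = ∑ j ∈ range p, PowerSeries.X ^ j * cartier p j f ^ p := by
  ext n
  simp only [map_sum, PowerSeries.coeff_X_pow_mul', coeff_pow_char, coeff_cartier]
  rw [sum_eq_single_of_mem (n % p) (mem_range.2 (Nat.mod_lt _ hp.out.pos))]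
  · have hdvd : p ∣ n - n % p := Nat.dvd_sub_mod n
    rw [if_pos (Nat.mod_le n p), if_pos hdvd, Nat.mul_div_cancel' hdvd,
      Nat.sub_add_cancel (Nat.mod_le n p)]
  · intro j hj hne
    split_ifs with hle hdvd
    · obtain ⟨c, hc⟩ := hdvd
      have hn : n = p * c + j := by omega
      rw [hn, Nat.mul_add_mod, Nat.mod_eq_of_lt (mem_range.1 hj)] at hne
      exact absurd rfl hne
    · rfl
    · rfl

lemma cartier_mul_pow_char {j : ℕ} (hj : j < p) (f g : (ZMod p)⟦X⟧) :
    cartier p j (f * g ^ p) = cartier p j f * g := by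
  have hfg : f * g ^ p = ∑ i ∈ range p, PowerSeries.X ^ i * (cartier p i f * g) ^ p := by
    conv_lhs => rw [eq_sum_X_pow_mul_cartier_pow f]
    rw [sum_mul]
    exact sum_congr rfl fun i _ => by ring
  rw [hfg, map_sum, sum_eq_single_of_mem j (mem_range.2 hj)]
  · rw [cartier_X_pow_mul_pow_char hj hj, if_pos rfl]
  · intro i hi hne
    rw [cartier_X_pow_mul_pow_char (mem_range.1 hi) hj, if_neg hne]

lemma exists_cartier_ne_zero {f : (ZMod p)⟦X⟧} (hf : f ≠ 0) : ∃ j < p, cartier p j f ≠ 0 := by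
  by_contra! hzero
  refine hf ((eq_sum_X_pow_mul_cartier_pow f).trans (sum_eq_zero fun j hj => ?_))
  rw [hzero j (mem_range.1 hj), zero_pow hp.out.ne_zero, mul_zero]

end Cartier

section Christol

open PowerSeries Polynomial Finset

lemma exists_sum_mul_pow_eq_zero_of_isAlgebraic {R A : Type*} [CommRing R] [IsDomain R]
    [CommRing A] [Algebra R A] (p : ℕ) {y : A} (hy : IsAlgebraic R y) :
    ∃ (s : ℕ) (c : ℕ → R), (∃ k ≤ s, c k ≠ 0) ∧
      ∑ k ∈ range (s + 1), algebraMap R A (c k) * y ^ p ^ k = 0 := by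
  obtain ⟨r, hr, hint⟩ := hy.exists_integral_multiple
  let B := Algebra.adjoin R {r • y}
  have : Module.Finite R B := Algebra.finite_adjoin_simple_of_isIntegral hint
  let s := Module.finrank R B
  let z : B := ⟨r • y, Algebra.self_mem_adjoin_singleton R _⟩
  have hdep : ¬ LinearIndependent R fun k : Fin (s + 1) => z ^ p ^ (k : ℕ) := fun h => by
    simpa [s] using h.fintype_card_le_finrank
  obtain ⟨c, hc, k, hck⟩ := Fintype.not_linearIndependent_iff.1 hdep
  refine ⟨s, fun k => if h : k < s + 1 then c ⟨k, h⟩ * r ^ p ^ k else 0, ⟨k, by omega, ?_⟩, ?_⟩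
  · simp only [dif_pos k.2]
    exact mul_ne_zero hck (pow_ne_zero _ hr)
  · rw [Finset.sum_range, ← map_zero B.val, ← hc, map_sum]
    refine sum_congr rfl fun i _ => ?_
    simp only [dif_pos i.2, z, map_pow, Subalgebra.coe_val, Subalgebra.coe_algebraMap,
      Algebra.smul_def, map_mul, mul_pow, mul_assoc, Fin.eta]

variable {p : ℕ} [hp : Fact p.Prime]

/-- Applying a Cartier operator lowers every Frobenius power of `y` by one, so the lowest
coefficient of a relation can be made nonzero. -/
lemma exists_mul_eq_sum_mul_pow {y : (ZMod p)⟦X⟧} {s : ℕ} {c : ℕ → (ZMod p)[X]}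
    (hc : ∃ k ≤ s, c k ≠ 0)
    (hrel : ∑ k ∈ range (s + 1), (c k : (ZMod p)⟦X⟧) * y ^ p ^ k = 0) :
    ∃ (a : (ZMod p)[X]) (t : ℕ) (b : ℕ → (ZMod p)[X]), a ≠ 0 ∧
      (a : (ZMod p)⟦X⟧) * y = ∑ k ∈ range t, (b k : (ZMod p)⟦X⟧) * (y ^ p ^ k) ^ p := by
  induction s generalizing c with
  | zero =>
    obtain ⟨k, hk, hck⟩ := hc
    obtain rfl : k = 0 := by omega
    exact ⟨c 0, 0, 0, hck, by simpa using hrel⟩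
  | succ s ih =>
    rw [sum_range_succ'] at hrel
    simp only [pow_succ p, pow_mul y, pow_zero, pow_one] at hrel
    by_cases hc0 : c 0 = 0
    · obtain ⟨_ | k, hk, hck⟩ := hc
      · exact absurd hc0 hck
      obtain ⟨j, hj, hne⟩ := exists_cartier_ne_zero (f := (c (k + 1) : (ZMod p)⟦X⟧))
        (by exact_mod_cast hck)
      choose d _ hd using fun i => exists_coe_eq_cartier hp.out.pos j (c (i + 1)).natDegree
        (Nat.le_mul_of_pos_left (c (i + 1)).natDegree hp.out.pos)
      refine ih (c := d) ⟨k, by omega, fun h => hne (by rw [← hd, h, Polynomial.coe_zero])⟩ ?_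
      have hcartier := congrArg (cartier p j) hrel
      rw [hc0, Polynomial.coe_zero, zero_mul, add_zero, map_sum, map_zero] at hcartier
      rw [← hcartier]
      exact sum_congr rfl fun i _ => by rw [cartier_mul_pow_char hj, hd]
    · refine ⟨c 0, s + 1, fun k => -c (k + 1), hc0, ?_⟩
      simp only [Polynomial.coe_neg, neg_mul, sum_neg_distrib]
      linear_combination hrel

/-- The series `g` for which `a * g` is a combination of `y, y ^ p, …, y ^ p ^ t` with polynomial
coefficients of degree at most `D`: a finite set, stable under the Cartier operators as soon as `y`
satisfies an additive equation with lowest term `a * y`. -/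
def frobeniusCombinations (a : (ZMod p)[X]) (y : (ZMod p)⟦X⟧) (t D : ℕ) : Set (ZMod p)⟦X⟧ :=
  {g | ∃ d : ℕ → (ZMod p)[X], (∀ k, (d k).natDegree ≤ D) ∧
    (a : (ZMod p)⟦X⟧) * g = ∑ k ∈ range (t + 1), (d k : (ZMod p)⟦X⟧) * y ^ p ^ k}

lemma finite_frobeniusCombinations {a : (ZMod p)[X]} (ha : a ≠ 0) (y : (ZMod p)⟦X⟧) (t D : ℕ) :
    (frobeniusCombinations a y t D).Finite := by
  have hfin : Finite (degreeLT (ZMod p) (D + 1)) :=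
    Finite.of_equiv _ (degreeLTEquiv (ZMod p) (D + 1)).symm.toEquiv
  let comb (d : Fin (t + 1) → degreeLT (ZMod p) (D + 1)) : (ZMod p)⟦X⟧ :=
    ∑ k, ((d k : (ZMod p)[X]) : (ZMod p)⟦X⟧) * y ^ p ^ (k : ℕ)
  have ha' : (a : (ZMod p)⟦X⟧) ≠ 0 := by exact_mod_cast ha
  refine ((Set.finite_range comb).subset ?_).of_finite_image (mul_right_injective₀ ha').injOn
  rintro _ ⟨g, ⟨d, hd, hg⟩, rfl⟩
  refine ⟨fun k => ⟨d k, ?_⟩, ?_⟩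
  · rw [mem_degreeLT]
    exact degree_le_natDegree.trans_lt (by exact_mod_cast Nat.lt_succ_of_le (hd k))
  · simp only [comb, hg, Finset.sum_range]

lemma self_mem_frobeniusCombinations {a : (ZMod p)[X]} (y : (ZMod p)⟦X⟧) (t : ℕ) {D : ℕ}
    (ha : a.natDegree ≤ D) : y ∈ frobeniusCombinations a y t D := by
  refine ⟨fun k => if k = 0 then a else 0, fun k => ?_, ?_⟩
  · dsimp only
    split_ifs <;> simp [ha]
  · rw [sum_eq_single_of_mem 0 (by simp) fun k _ hk => by simp [hk]]
    simp

lemma natDegree_pow_mul_add_le {R : Type*} [Semiring R] {D n : ℕ} (hn : 2 ≤ n) {a b d e : R[X]}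
    (ha : a.natDegree ≤ D) (hb : b.natDegree ≤ D) (hd : d.natDegree ≤ D) (he : e.natDegree ≤ D) :
    (a ^ (n - 2) * (d * b + a * e)).natDegree ≤ n * D :=
  calc (a ^ (n - 2) * (d * b + a * e)).natDegree
      ≤ (n - 2) * D + (D + D) := natDegree_mul_le_of_le (natDegree_pow_le_of_le _ ha)
        (natDegree_add_le_of_degree_le (natDegree_mul_le_of_le hd hb)
          (natDegree_mul_le_of_le ha he))
    _ = n * D := by
        obtain ⟨m, rfl⟩ := Nat.exists_eq_add_of_le' hn
        rw [Nat.add_sub_cancel]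
        ring

lemma cartier_mem_frobeniusCombinations {a : (ZMod p)[X]} {y : (ZMod p)⟦X⟧} {t D : ℕ}
    {b : ℕ → (ZMod p)[X]} (ha : a.natDegree ≤ D) (hb : ∀ k < t, (b k).natDegree ≤ D)
    (hy : (a : (ZMod p)⟦X⟧) * y = ∑ k ∈ range t, (b k : (ZMod p)⟦X⟧) * (y ^ p ^ k) ^ p)
    {g : (ZMod p)⟦X⟧} (hg : g ∈ frobeniusCombinations a y t D) {j : ℕ} (hj : j < p) :
    cartier p j g ∈ frobeniusCombinations a y t D := by
  obtain ⟨d, hd, hg⟩ := hg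
  let e (k : ℕ) : (ZMod p)[X] := a ^ (p - 2) * (d 0 * b k + a * d (k + 1))
  have hpow : (a : (ZMod p)⟦X⟧) ^ p = a ^ (p - 2) * a * a := by
    rw [mul_assoc, ← sq, ← pow_add, Nat.sub_add_cancel hp.out.two_le]
  have hga : g * (a : (ZMod p)⟦X⟧) ^ p = ∑ k ∈ range t, (e k : (ZMod p)⟦X⟧) * (y ^ p ^ k) ^ p := by
    rw [sum_range_succ'] at hg
    simp only [pow_succ p, pow_mul y, pow_zero, pow_one] at hg
    simp only [e, Polynomial.coe_mul, Polynomial.coe_add, Polynomial.coe_pow, mul_add, add_mul,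
      sum_add_distrib, mul_assoc, ← mul_sum]
    linear_combination g * hpow + (a : (ZMod p)⟦X⟧) ^ (p - 2) * (a * hg + d 0 * hy)
  have hcart (k : ℕ) : ∃ f : (ZMod p)[X], f.natDegree ≤ D ∧
      (k < t → (f : (ZMod p)⟦X⟧) = cartier p j (e k : (ZMod p)⟦X⟧)) ∧ (k = t → f = 0) := by
    by_cases hk : k < t
    · obtain ⟨f, hfD, hf⟩ := exists_coe_eq_cartier hp.out.pos j D
        (natDegree_pow_mul_add_le hp.out.two_le ha (hb k hk) (hd 0) (hd (k + 1)))
      exact ⟨f, hfD, fun _ => hf, fun h => absurd h hk.ne⟩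
    · exact ⟨0, by simp, fun h => absurd h hk, fun _ => rfl⟩
  choose f hfD hf hft using hcart
  refine ⟨f, hfD, ?_⟩
  calc (a : (ZMod p)⟦X⟧) * cartier p j g = cartier p j (g * (a : (ZMod p)⟦X⟧) ^ p) := by
        rw [cartier_mul_pow_char hj, mul_comm]
    _ = ∑ k ∈ range t, (f k : (ZMod p)⟦X⟧) * y ^ p ^ k := by
        rw [hga, map_sum]
        exact sum_congr rfl fun k hk => by rw [cartier_mul_pow_char hj, hf k (mem_range.1 hk)]
    _ = ∑ k ∈ range (t + 1), (f k : (ZMod p)⟦X⟧) * y ^ p ^ k := by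
        rw [sum_range_succ, hft t rfl, Polynomial.coe_zero, zero_mul, add_zero]

theorem isKAutomatic_coeff_of_isAlgebraic {y : (ZMod p)⟦X⟧} (hy : IsAlgebraic (ZMod p)[X] y) :
    IsKAutomatic p fun n => PowerSeries.coeff n y := by
  obtain ⟨s, c, hc, hrel⟩ := exists_sum_mul_pow_eq_zero_of_isAlgebraic p hy
  obtain ⟨a, t, b, ha, hay⟩ := exists_mul_eq_sum_mul_pow hc hrel
  let D := a.natDegree + ∑ k ∈ range t, (b k).natDegree
  have haD : a.natDegree ≤ D := Nat.le_add_right _ _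
  have hbD (k : ℕ) (hk : k < t) : (b k).natDegree ≤ D :=
    (single_le_sum (f := fun k => (b k).natDegree) (fun _ _ => Nat.zero_le _)
      (mem_range.2 hk)).trans (Nat.le_add_left _ _)
  exact isKAutomatic_coeff_of_mem_finite hp.out.pos (finite_frobeniusCombinations ha y t D)
    (fun g hg j hj => cartier_mem_frobeniusCombinations haD hbD hay hg hj)
    (self_mem_frobeniusCombinations y t haD)

end Christol

section FrobeniusDegree

/-- The degree `[B : σ(A)]` of a homomorphism of fields `σ : A →+* B`, with junk value `0` when `B`
is infinite over `σ(A)`. For `σ` the `m`-th power of the Frobenius of `A` it is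
`[A : A ^ p ^ m]`. -/
noncomputable def ringHomDegree {A B : Type*} [Field A] [Field B] (σ : A →+* B) : ℕ :=
  letI := σ.toAlgebra
  Module.finrank A B

section RingHomDegree

variable {A B C : Type*} [Field A] [Field B] [Field C]

lemma ringHomDegree_algebraMap [Algebra A B] :
    ringHomDegree (algebraMap A B) = Module.finrank A B := by
  rw [ringHomDegree, toAlgebra_algebraMap]

lemma ringHomDegree_comp (τ : B →+* C) (σ : A →+* B) :
    ringHomDegree (τ.comp σ) = ringHomDegree σ * ringHomDegree τ := by
  let _ := σ.toAlgebra
  let _ := τ.toAlgebra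
  let _ := (τ.comp σ).toAlgebra
  have : IsScalarTower A B C := .of_algebraMap_eq fun _ => rfl
  exact (Module.finrank_mul_finrank A B C).symm

variable {ι : Type*} [Fintype ι] {σ : A →+* B} {b : ι → B}

lemma card_le_ringHomDegree (hσ : σ.Finite)
    (hb : ∀ c : ι → A, ∑ i, σ (c i) * b i = 0 → ∀ i, c i = 0) :
    Fintype.card ι ≤ ringHomDegree σ := by
  let _ := σ.toAlgebra
  have : Module.Finite A B := hσ
  exact (Fintype.linearIndependent_iff.2 hb).fintype_card_le_finrank

lemma finite_and_ringHomDegree_le_card (hb : ∀ x, ∃ c : ι → A, ∑ i, σ (c i) * b i = x) :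
    σ.Finite ∧ ringHomDegree σ ≤ Fintype.card ι := by
  let _ := σ.toAlgebra
  have hspan : Submodule.span A (Set.range b) = ⊤ :=
    eq_top_iff.2 fun x _ => (Submodule.mem_span_range_iff_exists_fun A).2 (hb x)
  have : Module.Finite A B := ⟨⟨_, (Set.finite_range b).coe_toFinset ▸ hspan⟩⟩
  refine ⟨this, ?_⟩
  rw [ringHomDegree, ← finrank_top, ← hspan]
  exact finrank_range_le_card b

end RingHomDegree

section PerfectConstants

variable {k : Type*} [Field k] (p m : ℕ) [ExpChar k p] [PerfectRing k p]

open Polynomial in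
lemma exists_sum_pow_mul_X_pow_eq (f : k[X]) :
    ∃ c : Fin (p ^ m) → k[X], ∑ j, c j ^ p ^ m * X ^ (j : ℕ) = f := by
  induction f using Polynomial.induction_on' with
  | add f g hf hg =>
    obtain ⟨c, rfl⟩ := hf
    obtain ⟨d, rfl⟩ := hg
    exact ⟨c + d, by simp only [Pi.add_apply, add_pow_expChar_pow, add_mul, Finset.sum_add_distrib]⟩
  | monomial n a =>
    obtain ⟨r, rfl⟩ := (bijective_iterateFrobenius k p m).2 a
    have hpos : 0 < p ^ m := expChar_pow_pos k p m
    refine ⟨Pi.single ⟨n % p ^ m, Nat.mod_lt _ hpos⟩ (monomial (n / p ^ m) r), ?_⟩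
    rw [Fintype.sum_eq_single ⟨n % p ^ m, Nat.mod_lt _ hpos⟩ fun j hj => by
      rw [Pi.single_eq_of_ne hj, zero_pow hpos.ne', zero_mul]]
    rw [Pi.single_eq_same, monomial_pow, ← monomial_one_right_eq_X_pow, monomial_mul_monomial,
      mul_one, Nat.div_add_mod', iterateFrobenius_def]

lemma finite_and_ringHomDegree_iterateFrobenius_ratFunc_le [ExpChar (RatFunc k) p] :
    (iterateFrobenius (RatFunc k) p m).Finite ∧
      ringHomDegree (iterateFrobenius (RatFunc k) p m) ≤ p ^ m := by
  have hspan : ∀ x : RatFunc k, ∃ c : Fin (p ^ m) → RatFunc k,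
      ∑ j, iterateFrobenius (RatFunc k) p m (c j) * RatFunc.X ^ (j : ℕ) = x := by
    intro x
    obtain ⟨a, b, hb, rfl⟩ := IsFractionRing.div_surjective (A := Polynomial k) x
    have hb0 : algebraMap (Polynomial k) (RatFunc k) b ≠ 0 :=
      IsFractionRing.to_map_ne_zero_of_mem_nonZeroDivisors hb
    obtain ⟨c, hc⟩ := exists_sum_pow_mul_X_pow_eq p m (a * b ^ (p ^ m - 1))
    refine ⟨fun j => algebraMap _ _ (c j) / algebraMap _ _ b, ?_⟩
    replace hc := congrArg (algebraMap (Polynomial k) (RatFunc k)) hc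
    simp only [map_sum, map_mul, map_pow, RatFunc.algebraMap_X] at hc
    simp only [iterateFrobenius_def, div_pow, div_mul_eq_mul_div, ← Finset.sum_div, hc]
    rw [div_eq_div_iff (pow_ne_zero _ hb0) hb0, mul_assoc, ← pow_succ,
      Nat.sub_add_cancel (expChar_pow_pos k p m)]
  simpa using finite_and_ringHomDegree_le_card hspan

end PerfectConstants

variable {F : Type*} [Field F] (p m : ℕ) [ExpChar F p]

section FiniteDimensional

variable {E : Type*} [Field E] [Algebra F E] [FiniteDimensional F E] [ExpChar E p]

lemma finite_iterateFrobenius_of_finiteDimensional (hF : (iterateFrobenius F p m).Finite) :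
    (iterateFrobenius E p m).Finite := by
  have hfin : ((algebraMap F E).comp (iterateFrobenius F p m)).Finite :=
    .comp (RingHom.finite_algebraMap.2 inferInstance) hF
  rw [RingHom.iterateFrobenius_comm] at hfin
  exact .of_comp_finite hfin

lemma ringHomDegree_iterateFrobenius_eq :
    ringHomDegree (iterateFrobenius E p m) = ringHomDegree (iterateFrobenius F p m) := by
  refine Nat.eq_of_mul_eq_mul_left (Module.finrank_pos (R := F) (M := E)) ?_
  rw [← ringHomDegree_algebraMap, ← ringHomDegree_comp, ← RingHom.iterateFrobenius_comm,
    ringHomDegree_comp, mul_comm]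

end FiniteDimensional

variable {T L : Type*} [Field T] [Field L] [Algebra F L] [Algebra T L] [Algebra.IsAlgebraic F L]

lemma rank_le_ringHomDegree_iterateFrobenius (hF : (iterateFrobenius F p m).Finite)
    (hT : ∀ x : L, x ^ p ^ m ∈ (algebraMap T L).range) :
    Module.rank T L ≤ ringHomDegree (iterateFrobenius F p m) := by
  refine rank_le fun s hs => ?_
  let E := IntermediateField.adjoin F (s : Set L)
  have : FiniteDimensional F E := IntermediateField.finiteDimensional_adjoin fun x _ =>
    (Algebra.IsAlgebraic.isAlgebraic x).isIntegral
  have : ExpChar E p := expChar_of_injective_algebraMap (algebraMap F E).injective p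
  let b : s → E := fun x => ⟨x, IntermediateField.subset_adjoin F _ x.2⟩
  have hb (c : s → E) (hc : ∑ i, iterateFrobenius E p m (c i) * b i = 0) (i : s) : c i = 0 := by
    choose t ht using hT
    have hsum : ∑ i, t (c i) • (i : L) = 0 := by
      simpa [b, iterateFrobenius_def, Algebra.smul_def, ht] using congrArg (algebraMap E L) hc
    have hpow := ht (c i)
    rw [Fintype.linearIndependent_iff.1 hs _ hsum i, map_zero] at hpow
    exact Subtype.ext (pow_eq_zero_iff (expChar_pow_pos F p m).ne' |>.1 hpow.symm)
  rw [← ringHomDegree_iterateFrobenius_eq p m (E := E), ← Fintype.card_coe]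
  exact card_le_ringHomDegree (finite_iterateFrobenius_of_finiteDimensional p m hF) hb

end FrobeniusDegree

section Descent

lemma minpoly_eq_map_of_isIntegrallyClosedIn {k M V : Type*} [Field k] [Field M] [Field V]
    [Algebra k M] [Algebra M V] [Algebra k V] [IsScalarTower k M V] [IsIntegrallyClosedIn k M]
    {x : V} (hx : IsIntegral k x) : minpoly M x = (minpoly k x).map (algebraMap k M) := by
  have hdvd : minpoly M x ∣ (minpoly k x).map (algebraMap k M) :=
    minpoly.dvd_map_of_isScalarTower k M x
  have hlift : minpoly M x ∈ Polynomial.lifts (algebraMap k M) :=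
    (Polynomial.lifts_iff_coeff_lifts _).2 fun n =>
      IsIntegrallyClosedIn.algebraMap_eq_of_integral (Polynomial.isIntegral_coeff_of_dvd _ _
        (minpoly.monic hx) (minpoly.monic hx.tower_top) hdvd n)
  obtain ⟨f, hf, -, -⟩ := Polynomial.lifts_and_natDegree_eq_and_monic hlift
    (minpoly.monic hx.tower_top)
  have hroot : Polynomial.aeval x f = 0 := by
    rw [← Polynomial.aeval_map_algebraMap M, hf, minpoly.aeval]
  refine Polynomial.eq_of_monic_of_associated (minpoly.monic hx.tower_top)
    ((minpoly.monic hx).map _) (associated_of_dvd_dvd hdvd ?_)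
  rw [← hf]
  exact Polynomial.map_dvd _ (minpoly.dvd k x hroot)

lemma rank_le_of_natDegree_minpoly_le {k T : Type*} [Field k] [Field T] [Algebra k T]
    [Algebra.IsSeparable k T] {d : ℕ} (hd : ∀ t : T, (minpoly k t).natDegree ≤ d) :
    Module.rank k T ≤ d := by
  refine rank_le fun s hs => ?_
  let E := IntermediateField.adjoin k (s : Set T)
  have : FiniteDimensional k E := IntermediateField.finiteDimensional_adjoin fun x _ =>
    Algebra.IsSeparable.isIntegral k x
  obtain ⟨a, ha⟩ := Field.exists_primitive_element k E
  have hfinrank : Module.finrank k E ≤ d := by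
    rw [← IntermediateField.finrank_top', ← ha, IntermediateField.adjoin.finrank (.of_finite k a),
      ← minpoly.algebraMap_eq (algebraMap E T).injective]
    exact hd _
  have hsE : LinearIndependent k
      fun x : s => (⟨x, IntermediateField.subset_adjoin k _ x.2⟩ : E) :=
    .of_comp E.val.toLinearMap hs
  simpa using hsE.fintype_card_le_finrank.trans hfinrank

lemma pow_finrank_mem_of_isPurelyInseparable {S V : Type*} [Field S] [Field V] [Algebra S V]
    [IsPurelyInseparable S V] {p m : ℕ} [ExpChar S p] [FiniteDimensional S V]
    (hm : Module.finrank S V = p ^ m) (x : V) : x ^ p ^ m ∈ (algebraMap S V).range := by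
  obtain ⟨c, hc⟩ : p ^ IsPurelyInseparable.elemExponent S x ∣ p ^ m := by
    rw [← IsPurelyInseparable.minpoly_natDegree_eq' S p x, ← hm]
    exact minpoly.degree_dvd (.of_finite S x)
  rw [hc, pow_mul]
  exact pow_mem (IsPurelyInseparable.elemExponent_def' S p x) c

section RankBound

variable {k M L V : Type*} [Field k] [Field M] [Field L] [Field V] [Algebra k M] [Algebra k L]
  [Algebra M V] [Algebra L V] [Algebra k V] [IsScalarTower k M V] [IsScalarTower k L V]
  [IsIntegrallyClosedIn k M] [Algebra.IsAlgebraic k L]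

lemma minpoly_algebraMap_eq_map (x : L) :
    minpoly M (algebraMap L V x) = (minpoly k x).map (algebraMap k M) := by
  have hx : IsIntegral k x := (Algebra.IsAlgebraic.isAlgebraic x).isIntegral
  rw [minpoly_eq_map_of_isIntegrallyClosedIn (k := k) hx.algebraMap,
    minpoly.algebraMap_eq (algebraMap L V).injective]

lemma algebraMap_mem_separableClosure_iff {x : L} :
    algebraMap L V x ∈ separableClosure M V ↔ x ∈ separableClosure k L := by
  rw [mem_separableClosure_iff, mem_separableClosure_iff, IsSeparable, IsSeparable,
    minpoly_algebraMap_eq_map (k := k), Polynomial.separable_map]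

variable [FiniteDimensional M V]

lemma rank_separableClosure_le :
    Module.rank k (separableClosure k L) ≤ Module.finrank M (separableClosure M V) := by
  refine rank_le_of_natDegree_minpoly_le fun t => ?_
  have ht : algebraMap L V t ∈ separableClosure M V :=
    algebraMap_mem_separableClosure_iff (k := k).2 t.2
  calc (minpoly k t).natDegree
      = (minpoly M (algebraMap L V t)).natDegree := by
        rw [minpoly_algebraMap_eq_map (k := k), Polynomial.natDegree_map,
          IntermediateField.minpoly_eq]
    _ = (minpoly M (⟨_, ht⟩ : separableClosure M V)).natDegree := by
        rw [IntermediateField.minpoly_eq]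
    _ ≤ _ := minpoly.natDegree_le _

lemma rank_le_finrank_of_frobenius {F : Type*} [Field F] [Algebra F L] [Algebra.IsAlgebraic F L]
    (p : ℕ) [ExpChar F p] [ExpChar M p]
    (hF : ∀ m, (iterateFrobenius F p m).Finite ∧ ringHomDegree (iterateFrobenius F p m) ≤ p ^ m) :
    Module.rank k L ≤ Module.finrank M V := by
  have : ExpChar (separableClosure M V) p :=
    expChar_of_injective_algebraMap (algebraMap M _).injective p
  obtain ⟨m, hm⟩ := IsPurelyInseparable.finrank_eq_pow (separableClosure M V) V p
  have hpow (x : L) : x ^ p ^ m ∈ (algebraMap (separableClosure k L) L).range := by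
    obtain ⟨s, hs⟩ := pow_finrank_mem_of_isPurelyInseparable hm (algebraMap L V x)
    have hmem : algebraMap L V (x ^ p ^ m) ∈ separableClosure M V := by
      rw [map_pow, ← hs]
      exact s.2
    exact ⟨⟨_, algebraMap_mem_separableClosure_iff.1 hmem⟩, rfl⟩
  have hinsep : Module.rank (separableClosure k L) L ≤
      (Module.finrank (separableClosure M V) V : Cardinal) := by
    refine (rank_le_ringHomDegree_iterateFrobenius p m (hF m).1 hpow).trans ?_
    rw [hm]
    exact_mod_cast (hF m).2
  rw [← rank_mul_rank k (separableClosure k L) L,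
    ← Module.finrank_mul_finrank M (separableClosure M V) V, Nat.cast_mul]
  exact mul_le_mul' rank_separableClosure_le hinsep

end RankBound

lemma repr_mem_range_of_rank_le {k M L V ι : Type*} [Field k] [Field M] [Field L] [Field V]
    [Algebra k M] [Algebra k L] [Algebra M V] [Algebra L V] [Algebra k V] [IsScalarTower k M V]
    [IsScalarTower k L V] [Finite ι] (e : Module.Basis ι M V) {b : ι → L}
    (hb : ∀ i, algebraMap L V (b i) = e i) (hrank : Module.rank k L ≤ Module.finrank M V)
    (x : L) (i : ι) : e.repr (algebraMap L V x) i ∈ (algebraMap k M).range := by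
  have := Fintype.ofFinite ι
  rw [Module.finrank_eq_card_basis e] at hrank
  have : FiniteDimensional k L :=
    Module.rank_lt_aleph0_iff.1 (hrank.trans_lt Cardinal.natCast_lt_aleph0)
  have hindep : LinearIndependent k b := by
    refine .of_comp (IsScalarTower.toAlgHom k L V).toLinearMap ?_
    convert e.linearIndependent.restrict_scalars' k using 1
    exact funext hb
  have hspan : Submodule.span k (Set.range b) = ⊤ :=
    hindep.span_eq_top_of_card_eq_finrank' (le_antisymm hindep.fintype_card_le_finrank
      (Module.finrank_le_of_rank_le hrank))
  obtain ⟨c, hc⟩ := (Submodule.mem_span_range_iff_exists_fun k).1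
    (hspan ▸ Submodule.mem_top : x ∈ Submodule.span k (Set.range b))
  have hx : algebraMap L V x = ∑ j, algebraMap k M (c j) • e j := by
    simp only [← hc, map_sum, ← hb, algebraMap_smul, ← algebraMap.coe_smul]
  exact ⟨c i, by rw [hx, e.repr_sum_self]⟩

theorem isAlgebraic_repr_of_isAlgebraic {F M V ι : Type*} [Field F] [Field M] [Field V]
    [Algebra F M] [Algebra M V] [Algebra F V] [IsScalarTower F M V] [Finite ι] (p : ℕ) [ExpChar F p]
    (hF : ∀ m, (iterateFrobenius F p m).Finite ∧ ringHomDegree (iterateFrobenius F p m) ≤ p ^ m)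
    (e : Module.Basis ι M V) (he : ∀ i, IsAlgebraic F (e i)) {x : V} (hx : IsAlgebraic F x)
    (i : ι) : IsAlgebraic F (e.repr x i) := by
  have : FiniteDimensional M V := .of_basis e
  have : ExpChar M p := expChar_of_injective_algebraMap (algebraMap F M).injective p
  let k := algebraicClosure F M
  let L := algebraicClosure k V
  have : IsIntegrallyClosedIn k M := .of_isIntegralClosure F
  have : Algebra.IsAlgebraic F L := .trans F k L
  have hmem {y : V} (hy : IsAlgebraic F y) : y ∈ L := mem_algebraicClosure_iff.2 (hy.tower_top k)
  obtain ⟨c, hc⟩ := repr_mem_range_of_rank_le (k := k) (L := L) e (b := fun j => ⟨e j, hmem (he j)⟩)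
    (fun _ => rfl) (rank_le_finrank_of_frobenius p hF) ⟨x, hmem hx⟩ i
  exact mem_algebraicClosure_iff.1 (hc ▸ c.2)

end Descent

section DigitSeries

open Filter Topology PowerSeries

lemma nonarchimedeanRing_of_valued : NonarchimedeanRing Kv where
  is_nonarchimedean U hU := by
    obtain ⟨γ, hγ⟩ := Valued.mem_nhds_zero.1 hU
    exact ⟨⟨(Valued.v (R := Kv)).restrict.ltAddSubgroup γ,
      AddSubgroup.isOpen_of_mem_nhds _ (Valued.mem_nhds_zero.2 ⟨γ, fun _ hx => hx⟩)⟩, hγ⟩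

lemma setOf_valuation_sub_le_mem_nhds (x : Kv) {r : Kv} (hr : r ≠ 0) :
    {y : Kv | Valued.v (y - x) ≤ Valued.v r} ∈ 𝓝 x :=
  Valued.mem_nhds.2 ⟨Units.mk0 ((Valued.v (R := Kv)).restrict r) (by simp [hr]),
    fun _ hy => ((Valued.v (R := Kv)).restrict_lt_iff.1 hy).le⟩

lemma exists_valuation_pow_mul_le_one {π : Kv} (hπ : Valued.v π < 1) (x : Kv) :
    ∃ k : ℕ, Valued.v (π ^ k * x) ≤ 1 := by
  obtain rfl | hx := eq_or_ne x 0
  · exact ⟨0, by simp⟩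
  have hx' : Valued.v x ≠ 0 := (Valuation.ne_zero_iff _).2 hx
  obtain ⟨k, hk⟩ := exists_pow_lt₀ hπ (Units.mk0 _ hx')⁻¹
  refine ⟨k, ?_⟩
  rw [Units.val_inv_eq_inv_val, Units.val_mk0] at hk
  rw [map_mul, map_pow]
  exact (mul_le_mul_left hk.le _).trans_eq (inv_mul_cancel₀ hx')

variable {π : Kv}

lemma eq_zero_of_valuation_le_pow (hπ : Valued.v π < 1) {x : Kv}
    (hx : ∀ n : ℕ, Valued.v x ≤ Valued.v (π ^ n)) : x = 0 := by
  by_contra hne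
  obtain ⟨n, hn⟩ := exists_pow_lt₀ hπ (Units.mk0 _ ((Valuation.ne_zero_iff _).2 hne))
  exact (hn.trans_le (by simpa using hx n)).false

lemma tendsto_mul_pow_zero_of_valuation_le_one (hπ : Valued.v π < 1) {b : ℕ → Kv}
    (hb : ∀ n, Valued.v (b n) ≤ 1) : Tendsto (fun n => b n * π ^ n) atTop (𝓝 0) := by
  have hpow := Valued.tendsto_zero_pow_of_v_lt_one hπ
  rw [(Valued.hasBasis_nhds_zero _ _).tendsto_right_iff] at hpow ⊢
  intro γ _
  filter_upwards [hpow γ trivial] with n hn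
  refine lt_of_le_of_lt ?_ hn
  rw [Valuation.restrict_le_iff, map_mul]
  exact mul_le_of_le_one_left' (hb n)

/-- The sum `∑ n, b n * π ^ n`, which is the junk value `0` unless the series converges; it does
converge when `Kv` is complete, `Valued.v π < 1` and `Valued.v (b n) ≤ 1` for all `n`. -/
noncomputable def digitSeries (π : Kv) (b : ℕ → Kv) : Kv := ∑' n, b n * π ^ n

lemma digitSeries_mul_left (c : Kv) (b : ℕ → Kv) :
    digitSeries π (fun n => c * b n) = c * digitSeries π b := by
  simp only [digitSeries, mul_assoc, tsum_mul_left]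

variable [CompleteSpace Kv]

lemma summable_mul_pow_of_valuation_le_one (hπ : Valued.v π < 1) {b : ℕ → Kv}
    (hb : ∀ n, Valued.v (b n) ≤ 1) : Summable fun n => b n * π ^ n := by
  have := nonarchimedeanRing_of_valued (Kv := Kv)
  apply NonarchimedeanAddGroup.summable_of_tendsto_cofinite_zero
  rw [Nat.cofinite_eq_atTop]
  exact tendsto_mul_pow_zero_of_valuation_le_one hπ hb

lemma valuation_digitSeries_le_one (hπ : Valued.v π < 1) {b : ℕ → Kv}
    (hb : ∀ n, Valued.v (b n) ≤ 1) : Valued.v (digitSeries π b) ≤ 1 := by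
  refine (Valued.isClosed_integer Kv).mem_of_tendsto
    (summable_mul_pow_of_valuation_le_one hπ hb).hasSum (Eventually.of_forall fun s => ?_)
  exact sum_mem fun n _ => mul_mem (show b n ∈ Valued.v.integer from hb n)
    (pow_mem (show π ∈ Valued.v.integer from hπ.le) n)

lemma digitSeries_eq_add_mul (hπ : Valued.v π < 1) {b : ℕ → Kv} (hb : ∀ n, Valued.v (b n) ≤ 1) :
    digitSeries π b = b 0 + π * digitSeries π (fun n => b (n + 1)) := by
  simp only [digitSeries]
  rw [(summable_mul_pow_of_valuation_le_one hπ hb).tsum_eq_zero_add, ← tsum_mul_left]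
  simp only [pow_zero, mul_one, pow_succ', mul_left_comm]

lemma digitSeries_sum (hπ : Valued.v π < 1) {ι : Type*} (s : Finset ι) {b : ι → ℕ → Kv}
    (hb : ∀ i ∈ s, ∀ n, Valued.v (b i n) ≤ 1) :
    digitSeries π (fun n => ∑ i ∈ s, b i n) = ∑ i ∈ s, digitSeries π (b i) := by
  simp only [digitSeries, Finset.sum_mul]
  exact Summable.tsum_finsetSum fun i hi => summable_mul_pow_of_valuation_le_one hπ (hb i hi)

lemma sub_digitSeries_eq_pow_mul (hπ : Valued.v π < 1) {b z : ℕ → Kv}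
    (hb : ∀ n, Valued.v (b n) ≤ 1) (hzb : ∀ n, z n = b n + π * z (n + 1)) (n : ℕ) :
    z 0 - digitSeries π b = π ^ n * (z n - digitSeries π (fun k => b (k + n))) := by
  induction n with
  | zero => simp
  | succ n ih =>
    rw [ih, hzb n, digitSeries_eq_add_mul hπ (b := fun k => b (k + n)) fun _ => hb _]
    simp only [zero_add, add_assoc, add_comm 1 n]
    ring

lemma eq_digitSeries_of_recurrence (hπ : Valued.v π < 1) {b z : ℕ → Kv}
    (hb : ∀ n, Valued.v (b n) ≤ 1) (hz : ∀ n, Valued.v (z n) ≤ 1)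
    (hzb : ∀ n, z n = b n + π * z (n + 1)) : z 0 = digitSeries π b := by
  refine sub_eq_zero.1 (eq_zero_of_valuation_le_pow hπ fun n => ?_)
  rw [sub_digitSeries_eq_pow_mul hπ hb hzb n, map_mul]
  exact mul_le_of_le_one_right' ((Valued.v.map_sub _ _).trans
    (max_le (hz _) (valuation_digitSeries_le_one hπ fun _ => hb _)))

lemma eq_zero_of_digitSeries_eq_zero (hπ : Valued.v π < 1) (hπ0 : π ≠ 0) {b : ℕ → Kv}
    (hb : ∀ n, Valued.v (b n) ≤ 1) (hb0 : ∀ n, Valued.v (b n) ≤ Valued.v π → b n = 0)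
    (hsum : digitSeries π b = 0) (n : ℕ) : b n = 0 := by
  have head_eq_zero {b : ℕ → Kv} (hb : ∀ n, Valued.v (b n) ≤ 1)
      (hb0 : ∀ n, Valued.v (b n) ≤ Valued.v π → b n = 0) (hsum : digitSeries π b = 0) :
      b 0 = 0 := by
    rw [digitSeries_eq_add_mul hπ hb, add_eq_zero_iff_eq_neg] at hsum
    apply hb0
    rw [hsum, Valuation.map_neg, map_mul]
    exact mul_le_of_le_one_right' (valuation_digitSeries_le_one hπ fun _ => hb _)
  induction n generalizing b with
  | zero => exact head_eq_zero hb hb0 hsum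
  | succ _ ih =>
    refine ih (b := fun n => b (n + 1)) (fun _ => hb _) (fun _ => hb0 _) ?_
    have htail : π * digitSeries π (fun n => b (n + 1)) = 0 := by
      rw [← hsum, digitSeries_eq_add_mul hπ hb, head_eq_zero hb hb0 hsum, zero_add]
    exact (mul_eq_zero.1 htail).resolve_left hπ0

end DigitSeries

section PowerSeriesEval

open PowerSeries

variable (p : ℕ) [Fact p.Prime] [Algebra (ZMod p) Kv]

lemma valuation_algebraMap_zmod_le_one (a : ZMod p) :
    Valued.v (algebraMap (ZMod p) Kv a) ≤ 1 := by
  rw [← ZMod.natCast_zmod_val a, map_natCast]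
  exact natCast_mem (Valued.v (R := Kv)).integer _

lemma valuation_algebraMap_zmod_eq_one {a : ZMod p} (ha : a ≠ 0) :
    Valued.v (algebraMap (ZMod p) Kv a) = 1 := by
  refine (valuation_algebraMap_zmod_le_one p a).antisymm ?_
  calc 1 = Valued.v (algebraMap (ZMod p) Kv a) * Valued.v (algebraMap (ZMod p) Kv a⁻¹) := by
        rw [← map_mul, ← map_mul, mul_inv_cancel₀ ha, map_one, map_one]
    _ ≤ Valued.v (algebraMap (ZMod p) Kv a) :=
        mul_le_of_le_one_right' (valuation_algebraMap_zmod_le_one p _)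

variable [CompleteSpace Kv] {π : Kv} (hπ : Valued.v π < 1)

lemma summable_algebraMap_coeff_mul_pow (hπ : Valued.v π < 1) (f : (ZMod p)⟦X⟧) :
    Summable fun n => algebraMap (ZMod p) Kv (coeff n f) * π ^ n :=
  summable_mul_pow_of_valuation_le_one hπ fun _ => valuation_algebraMap_zmod_le_one p _

lemma digitSeries_coeff_mul (hπ : Valued.v π < 1) (f g : (ZMod p)⟦X⟧) :
    digitSeries π (fun n => algebraMap (ZMod p) Kv (coeff n (f * g))) =
      digitSeries π (fun n => algebraMap (ZMod p) Kv (coeff n f)) *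
        digitSeries π (fun n => algebraMap (ZMod p) Kv (coeff n g)) := by
  have := nonarchimedeanRing_of_valued (Kv := Kv)
  have hf := summable_algebraMap_coeff_mul_pow p hπ f
  have hg := summable_algebraMap_coeff_mul_pow p hπ g
  have hfg := hf.mul_of_nonarchimedean hg
  simp only [digitSeries]
  rw [hf.tsum_mul_tsum_eq_tsum_sum_antidiagonal hg hfg]
  refine tsum_congr fun n => ?_
  rw [coeff_mul, map_sum, Finset.sum_mul]
  refine Finset.sum_congr rfl fun x hx => ?_
  rw [← Finset.HasAntidiagonal.mem_antidiagonal.1 hx, map_mul, pow_add, mul_mul_mul_comm]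

/-- Evaluation of power series over `𝔽_p` at an element `π` of positive valuation; its range is
the ring `𝔽_p[[π]]`. -/
noncomputable def powerSeriesEval : (ZMod p)⟦X⟧ →+* Kv where
  toFun f := digitSeries π fun n => algebraMap (ZMod p) Kv (coeff n f)
  map_zero' := by simp [digitSeries]
  map_one' := by
    rw [digitSeries, tsum_eq_single 0 fun n hn => by simp [coeff_one, hn]]
    simp
  map_add' f g := by
    simp only [digitSeries, map_add, add_mul]
    exact (summable_algebraMap_coeff_mul_pow p hπ f).tsum_add
      (summable_algebraMap_coeff_mul_pow p hπ g)
  map_mul' := digitSeries_coeff_mul p hπ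

lemma powerSeriesEval_apply (f : (ZMod p)⟦X⟧) :
    powerSeriesEval p hπ f = digitSeries π fun n => algebraMap (ZMod p) Kv (coeff n f) :=
  rfl

lemma powerSeriesEval_X : powerSeriesEval p hπ X = π := by
  rw [powerSeriesEval_apply, digitSeries, tsum_eq_single 1 fun n hn => by simp [coeff_X, hn]]
  simp

lemma powerSeriesEval_C (a : ZMod p) : powerSeriesEval p hπ (C a) = algebraMap (ZMod p) Kv a := by
  rw [powerSeriesEval_apply, digitSeries, tsum_eq_single 0 fun n hn => by simp [coeff_C, hn]]
  simp

lemma powerSeriesEval_coe (f : Polynomial (ZMod p)) :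
    powerSeriesEval p hπ f = Polynomial.aeval π f := by
  induction f using Polynomial.induction_on' with
  | add f g hf hg => simp [hf, hg]
  | monomial n a =>
    rw [← Polynomial.C_mul_X_pow_eq_monomial]
    simp [powerSeriesEval_X, powerSeriesEval_C]

lemma powerSeriesEval_injective (hπ0 : π ≠ 0) : Function.Injective (powerSeriesEval p hπ) := by
  refine (injective_iff_map_eq_zero _).2 fun f hf => PowerSeries.ext fun n => ?_
  rw [map_zero]
  refine (algebraMap (ZMod p) Kv).injective ?_
  rw [map_zero]
  refine eq_zero_of_digitSeries_eq_zero hπ hπ0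
    (fun n => valuation_algebraMap_zmod_le_one p _) (fun n hn => ?_) hf n
  by_contra hne
  have hcoeff : coeff n f ≠ 0 := fun h => hne (by rw [h, map_zero])
  exact (hn.trans_lt hπ).ne (valuation_algebraMap_zmod_eq_one p hcoeff)

lemma transcendental_zmod (hπ : Valued.v π < 1) (hπ0 : π ≠ 0) : Transcendental (ZMod p) π := by
  refine transcendental_iff_injective.2 fun f g hfg => Polynomial.coe_injective _
    (powerSeriesEval_injective p hπ hπ0 ?_)
  rwa [powerSeriesEval_coe, powerSeriesEval_coe]

end PowerSeriesEval

section DigitBasis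

open PowerSeries LaurentSeries

lemma exists_submodule_coe_eq_of_add_mem {V : Type*} [AddCommGroup V] (p : ℕ) [NeZero p]
    [Module (ZMod p) V] {Γ : Set V} (hne : Γ.Nonempty) (hadd : ∀ μ ∈ Γ, ∀ ν ∈ Γ, μ + ν ∈ Γ) :
    ∃ G : Submodule (ZMod p) V, (G : Set V) = Γ := by
  have succ_nsmul_mem {γ : V} (hγ : γ ∈ Γ) (n : ℕ) : (n + 1) • γ ∈ Γ := by
    induction n with
    | zero => simpa using hγ
    | succ n ih => rw [succ_nsmul]; exact hadd _ ih _ hγ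
  have hzero : (0 : V) ∈ Γ := by
    obtain ⟨γ, hγ⟩ := hne
    have hmem := succ_nsmul_mem hγ (p - 1)
    rwa [Nat.sub_add_cancel NeZero.one_le, ← Nat.cast_smul_eq_nsmul (ZMod p), CharP.cast_eq_zero,
      zero_smul] at hmem
  refine ⟨{ carrier := Γ, add_mem' := fun ha hb => hadd _ ha _ hb, zero_mem' := hzero,
            smul_mem' := fun c x hx => ?_ }, rfl⟩
  rw [← ZMod.natCast_zmod_val c, Nat.cast_smul_eq_nsmul]
  cases c.val with
  | zero => simpa using hzero
  | succ n => exact succ_nsmul_mem hx n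

variable {p : ℕ} [Fact p.Prime] [Algebra (ZMod p) Kv] {π : Kv} {G : Submodule (ZMod p) Kv}

lemma eq_zero_of_mem_of_valuation_le (hG : IsCompleteSetOfReps π (G : Set Kv)) {γ : Kv}
    (hγ : γ ∈ G) (hle : Valued.v γ ≤ Valued.v π) : γ = 0 := by
  obtain ⟨δ, -, hδ⟩ := hG.2 0 (by simp)
  rw [hδ γ ⟨hγ, by simpa using hle⟩, hδ 0 ⟨G.zero_mem, by simp⟩]

variable [CompleteSpace Kv]

lemma exists_digitSeries_eq {Γ : Set Kv} (hΓ : IsCompleteSetOfReps π Γ) (hπ0 : π ≠ 0)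
    (hπ : Valued.v π < 1) {x : Kv} (hx : Valued.v x ≤ 1) :
    ∃ a : ℕ → Kv, (∀ n, a n ∈ Γ) ∧ digitSeries π a = x := by
  have exists_digit (x : {x : Kv // Valued.v x ≤ 1}) :
      ∃ d ∈ Γ, ∃ y : {x : Kv // Valued.v x ≤ 1}, (x : Kv) = d + π * y := by
    obtain ⟨d, ⟨hd, hxd⟩, -⟩ := hΓ.2 x x.2
    refine ⟨d, hd, ⟨(x - d) / π, ?_⟩, by rw [mul_div_cancel₀ _ hπ0, add_sub_cancel]⟩
    rw [map_div₀]
    exact div_le_one_of_le₀ hxd zero_le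
  choose d hd y hy using exists_digit
  let z (n : ℕ) : {x : Kv // Valued.v x ≤ 1} := y^[n] ⟨x, hx⟩
  refine ⟨fun n => d (z n), fun n => hd _, ?_⟩
  refine (eq_digitSeries_of_recurrence hπ (z := fun n => (z n : Kv)) (fun n => hΓ.1 _ (hd _))
    (fun n => (z n).2) fun n => ?_).symm
  rw [hy (z n)]
  simp only [z, Function.iterate_succ_apply']

variable {ι : Type*} [Fintype ι]

lemma sum_powerSeriesEval_mul (hπ : Valued.v π < 1) {u : ι → Kv} (hu : ∀ i, Valued.v (u i) ≤ 1)
    (f : ι → (ZMod p)⟦X⟧) :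
    ∑ i, powerSeriesEval p hπ (f i) * u i = digitSeries π fun n => ∑ i, coeff n (f i) • u i := by
  rw [digitSeries_sum hπ]
  · refine Finset.sum_congr rfl fun i _ => ?_
    simp only [Algebra.smul_def, mul_comm _ (u i), digitSeries_mul_left, powerSeriesEval_apply]
  · intro i _ n
    rw [Algebra.smul_def, map_mul]
    exact mul_le_one' (valuation_algebraMap_zmod_le_one p _) (hu i)

/-- Evaluation of Laurent series over `𝔽_p` at a nonzero element `π` of positive valuation; its
range is the field `𝔽_p((π))`. -/
noncomputable def laurentSeriesEval (hπ : Valued.v π < 1) (hπ0 : π ≠ 0) : (ZMod p)⸨X⸩ →+* Kv :=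
  IsFractionRing.lift (powerSeriesEval_injective p hπ hπ0)

lemma laurentSeriesEval_algebraMap (hπ : Valued.v π < 1) (hπ0 : π ≠ 0) (f : (ZMod p)⟦X⟧) :
    laurentSeriesEval hπ hπ0 (algebraMap _ (ZMod p)⸨X⸩ f) = powerSeriesEval p hπ f :=
  IsFractionRing.lift_algebraMap _ f

variable [Algebra (ZMod p)⸨X⸩ Kv] {hπ : Valued.v π < 1} {hπ0 : π ≠ 0}
  (hM : algebraMap (ZMod p)⸨X⸩ Kv = laurentSeriesEval hπ hπ0)

include hM

lemma linearIndependent_laurentSeries {u : ι → Kv} (hu : ∀ i, Valued.v (u i) ≤ 1)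
    (hind : ∀ c : ι → ZMod p, Valued.v (∑ i, c i • u i) ≤ Valued.v π → c = 0) :
    LinearIndependent (ZMod p)⸨X⸩ u := by
  let _ : Algebra (ZMod p)⟦X⟧ Kv := (powerSeriesEval p hπ).toAlgebra
  have : IsScalarTower (ZMod p)⟦X⟧ (ZMod p)⸨X⸩ Kv := .of_algebraMap_eq fun f => by
    rw [hM, laurentSeriesEval_algebraMap]
    rfl
  rw [← LinearIndependent.iff_fractionRing (ZMod p)⟦X⟧, Fintype.linearIndependent_iff]
  intro f hf
  have hsum : digitSeries π (fun n => ∑ i, coeff n (f i) • u i) = 0 := by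
    rw [← sum_powerSeriesEval_mul hπ hu, ← hf]
    exact Finset.sum_congr rfl fun i _ => (Algebra.smul_def _ _).symm
  have hcoeff (n : ℕ) : ∑ i, coeff n (f i) • u i = 0 := by
    refine eq_zero_of_digitSeries_eq_zero hπ hπ0 (fun n => ?_) (fun n hn => ?_) hsum n
    · refine Valued.v.map_sum_le fun i _ => ?_
      rw [Algebra.smul_def, map_mul]
      exact mul_le_one' (valuation_algebraMap_zmod_le_one p _) (hu i)
    · exact Finset.sum_eq_zero fun i _ => by
        rw [show coeff n (f i) = 0 from congrFun (hind _ hn) i, zero_smul]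
  exact fun i => PowerSeries.ext fun n => congrFun (hind (fun i => coeff n (f i))
    (by simp [hcoeff n])) i

-- Modulo `π`, the elements `u i` have the same linear combinations as the `γ i`.
lemma linearIndependent_laurentSeries_of_valuation_sub_le {ι : Type*} [Finite ι]
    (hG : IsCompleteSetOfReps π (G : Set Kv)) {γ : ι → G} (hγ : LinearIndependent (ZMod p) γ)
    {u : ι → Kv} (hu : ∀ i, Valued.v (u i - γ i) ≤ Valued.v π) :
    LinearIndependent (ZMod p)⸨X⸩ u := by
  have := Fintype.ofFinite ι
  refine linearIndependent_laurentSeries hM (fun i => ?_) fun c hc => ?_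
  · rw [← sub_add_cancel (u i) (γ i)]
    exact (Valued.v.map_add _ _).trans (max_le ((hu i).trans hπ.le) (hG.1 _ (γ i).2))
  · have hdiff : Valued.v (∑ i, c i • (u i - γ i)) ≤ Valued.v π := by
      refine Valued.v.map_sum_le fun i _ => ?_
      rw [Algebra.smul_def, map_mul]
      exact mul_le_of_le_one_of_le (valuation_algebraMap_zmod_le_one p _) (hu i)
    have hle : Valued.v ((∑ i, c i • γ i : G) : Kv) ≤ Valued.v π := by
      have hsum : ((∑ i, c i • γ i : G) : Kv) = ∑ i, c i • u i - ∑ i, c i • (u i - γ i) := by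
        simp [smul_sub]
      rw [hsum]
      exact (Valued.v.map_sub _ _).trans (max_le hc hdiff)
    have hzero : ∑ i, c i • γ i = 0 :=
      Subtype.ext (eq_zero_of_mem_of_valuation_le hG (Subtype.prop _) hle)
    exact funext (Fintype.linearIndependent_iff.1 hγ c hzero)

lemma finite_of_dense {F : Type*} [Field F] [Algebra F Kv] [Algebra F (ZMod p)⸨X⸩]
    [IsScalarTower F (ZMod p)⸨X⸩ Kv] (hG : IsCompleteSetOfReps π (G : Set Kv))
    {W : Submodule F Kv} [FiniteDimensional F W] (hW : Dense (W : Set Kv)) :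
    Module.Finite (ZMod p) G := by
  have exists_near (γ : Kv) : ∃ u ∈ W, Valued.v (u - γ) ≤ Valued.v π :=
    hW.inter_nhds_nonempty (setOf_valuation_sub_le_mem_nhds γ hπ0)
  choose u huW hu using exists_near
  refine Module.rank_lt_aleph0_iff.1 (lt_of_le_of_lt (rank_le (n := Module.finrank F W) ?_)
    Cardinal.natCast_lt_aleph0)
  intro s hs
  let w (γ : s) : W := ⟨u γ, huW _⟩
  have hu_indep : LinearIndependent F fun γ : s => u γ :=
    (linearIndependent_laurentSeries_of_valuation_sub_le hM hG hs fun γ => hu γ).restrict_scalars'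
      F
  have hw : LinearIndependent F w := .of_comp W.subtype hu_indep
  simpa using hw.fintype_card_le_finrank

lemma digitSeries_eq_sum_smul (hG : IsCompleteSetOfReps π (G : Set Kv))
    (e : Module.Basis ι (ZMod p) G) (b : ℕ → G) :
    digitSeries π (fun n => (b n : Kv)) =
      ∑ i, algebraMap (ZMod p)⟦X⟧ (ZMod p)⸨X⸩ (.mk fun n => e.repr (b n) i) • (e i : Kv) := by
  have hb : (fun n => (b n : Kv)) = fun n => ∑ i, e.repr (b n) i • (e i : Kv) := by
    funext n
    conv_lhs => rw [← e.sum_repr (b n), Submodule.coe_sum]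
    rfl
  simp only [Algebra.smul_def, hM, laurentSeriesEval_algebraMap]
  rw [sum_powerSeriesEval_mul hπ fun i => hG.1 _ (e i).2, hb]
  simp only [coeff_mk]

lemma span_laurentSeries_eq_top {ι : Type*} [Finite ι]
    (hG : IsCompleteSetOfReps π (G : Set Kv)) (e : Module.Basis ι (ZMod p) G) :
    Submodule.span (ZMod p)⸨X⸩ (Set.range fun i => (e i : Kv)) = ⊤ := by
  have := Fintype.ofFinite ι
  refine eq_top_iff.2 fun x _ => ?_
  obtain ⟨k, hk⟩ := exists_valuation_pow_mul_le_one hπ x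
  obtain ⟨a, ha, hax⟩ := exists_digitSeries_eq hG hπ0 hπ hk
  let T : (ZMod p)⸨X⸩ := algebraMap (ZMod p)⟦X⟧ _ X
  have hT : algebraMap (ZMod p)⸨X⸩ Kv T = π := by
    rw [hM, laurentSeriesEval_algebraMap, powerSeriesEval_X]
  have hT0 : T ^ k ≠ 0 := pow_ne_zero _ fun h => hπ0 (by rw [← hT, h, map_zero])
  rw [← Submodule.smul_mem_iff _ hT0, Algebra.smul_def, map_pow, hT, ← hax,
    digitSeries_eq_sum_smul hM hG e fun n => ⟨a n, ha n⟩]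
  exact Submodule.sum_mem _ fun i _ => Submodule.smul_mem _ _ (Submodule.subset_span ⟨i, rfl⟩)

/-- An `𝔽_p`-basis of an additive digit system `G`, as a basis of `Kv` over `𝔽_p((π))`. -/
noncomputable def digitBasis (hG : IsCompleteSetOfReps π (G : Set Kv))
    (e : Module.Basis ι (ZMod p) G) : Module.Basis ι (ZMod p)⸨X⸩ Kv :=
  .mk (linearIndependent_laurentSeries_of_valuation_sub_le hM hG e.linearIndependent
    (u := fun i => (e i : Kv)) (by simp)) (span_laurentSeries_eq_top hM hG e).ge

lemma digitBasis_apply (hG : IsCompleteSetOfReps π (G : Set Kv))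
    (e : Module.Basis ι (ZMod p) G) (i : ι) : digitBasis hM hG e i = e i :=
  Module.Basis.mk_apply ..

lemma digitBasis_repr_digitSeries (hG : IsCompleteSetOfReps π (G : Set Kv))
    (e : Module.Basis ι (ZMod p) G) (b : ℕ → G) (i : ι) :
    (digitBasis hM hG e).repr (digitSeries π fun n => (b n : Kv)) i =
      algebraMap (ZMod p)⟦X⟧ (ZMod p)⸨X⸩ (.mk fun n => e.repr (b n) i) := by
  simp only [digitSeries_eq_sum_smul hM hG e b, ← digitBasis_apply hM hG e]
  rw [Module.Basis.repr_sum_self]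

end DigitBasis

section AlgebraicDependence

open IntermediateField
open scoped IntermediateField.algebraAdjoinAdjoin

variable {V : Type*} [Field V]

lemma isAlgebraic_of_forall_isAlgebraic {A B : Type*} [Field A] [Field B] [Algebra A V]
    [Algebra B V] (hBA : ∀ b : B, IsAlgebraic A (algebraMap B V b)) {x : V}
    (hx : IsAlgebraic B x) : IsAlgebraic A x := by
  let toClosure : B →+* algebraicClosure A V :=
    (algebraMap B V).codRestrict (algebraicClosure A V) fun b => mem_algebraicClosure_iff.2 (hBA b)
  let _ : Algebra B (algebraicClosure A V) := toClosure.toAlgebra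
  have : IsScalarTower B (algebraicClosure A V) V := .of_algebraMap_eq fun _ => rfl
  exact (hx.tower_top (algebraicClosure A V)).restrictScalars A

lemma linearIndependent_pow_of_transcendental {R : Type*} [CommRing R] [Algebra R V] {y : V}
    (hy : Transcendental R y) : LinearIndependent R fun n : ℕ => y ^ n := by
  have hli := (Polynomial.basisMonomials R).linearIndependent.map'
    (Polynomial.aeval y : Polynomial R →ₐ[R] V).toLinearMap
    (LinearMap.ker_eq_bot.2 (transcendental_iff_injective.1 hy))
  simpa [Function.comp_def, Polynomial.aeval_monomial] using hli

lemma isAlgebraic_of_pow_mem {F : Type*} [Field F] [Algebra F V] {y : V} (W : Submodule F V)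
    [FiniteDimensional F W] (hW : ∀ n : ℕ, y ^ n ∈ W) : IsAlgebraic F y := by
  by_contra hy
  have hli : LinearIndependent F fun n : ℕ => (⟨y ^ n, hW n⟩ : W) :=
    .of_comp W.subtype (linearIndependent_pow_of_transcendental hy)
  have := hli.finite
  exact not_finite ℕ

lemma isAlgebraic_adjoin_simple_swap {k : Type*} [Field k] [Algebra k V] {x y : V}
    (hy : Transcendental k y) (hyx : IsAlgebraic k⟮x⟯ y) : IsAlgebraic k⟮y⟯ x := by
  rw [← IsFractionRing.isAlgebraic_iff (Algebra.adjoin k {x})] at hyx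
  rw [← IsFractionRing.isAlgebraic_iff (Algebra.adjoin k {y})]
  obtain rfl | hne := eq_or_ne x y
  · exact hyx
  by_contra hxy
  have hindep_y : AlgebraicIndepOn k id ({y} : Set V) :=
    (algebraicIndependent_singleton_iff (⟨y, rfl⟩ : ({y} : Set V))).2 hy
  have hindep_xy : AlgebraicIndepOn k id (insert x {y} : Set V) :=
    hindep_y.insert (by rwa [Set.image_id])
  rw [Set.pair_comm, AlgebraicIndepOn.insert_iff (by simpa using hne.symm), Set.image_id]
    at hindep_xy
  exact hindep_xy.2 hyx

lemma isAlgebraic_coe_closure_singleton {A : Type*} [Field A] [Algebra A V] {x : V}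
    (hx : IsAlgebraic A x) (a : Subfield.closure {x}) : IsAlgebraic A (a : V) := by
  have hle : Subfield.closure {x} ≤ (algebraicClosure A V).toSubfield := by
    rw [Subfield.closure_le, Set.singleton_subset_iff]
    exact mem_algebraicClosure_iff.2 hx
  exact mem_algebraicClosure_iff.1 (hle a.2)

section FunctionField

variable {K : Subfield V} {x₀ : V}
  [FiniteDimensional (Subfield.closure {x₀}) (Submodule.span (Subfield.closure {x₀}) (K : Set V))]

variable (x₀) in
lemma isAlgebraic_closure_singleton_of_finiteDimensional_span {x : V} (hx : IsAlgebraic K x) :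
    IsAlgebraic (Subfield.closure {x₀}) x :=
  isAlgebraic_of_forall_isAlgebraic (fun y => isAlgebraic_of_pow_mem _ fun n =>
    Submodule.subset_span (pow_mem y.2 n)) hx

variable {A : Type*} [Field A] [Algebra A V]

lemma isAlgebraic_generator (k : Type*) [Field k] [Algebra k A] [Algebra k V] [IsScalarTower k A V]
    {π : V} (hπk : Transcendental k π) (hπA : IsAlgebraic A π) (hπK : IsAlgebraic K π) :
    IsAlgebraic A x₀ := by
  have hπx₀ : IsAlgebraic k⟮x₀⟯ π :=
    isAlgebraic_of_forall_isAlgebraic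
      (isAlgebraic_coe_closure_singleton (isAlgebraic_algebraMap (AdjoinSimple.gen k x₀)))
      (isAlgebraic_closure_singleton_of_finiteDimensional_span x₀ hπK)
  have hle : k⟮π⟯ ≤ (algebraicClosure A V).restrictScalars k :=
    adjoin_simple_le_iff.2 (mem_algebraicClosure_iff.2 hπA)
  exact isAlgebraic_of_forall_isAlgebraic (fun b => mem_algebraicClosure_iff.1 (hle b.2))
    (isAlgebraic_adjoin_simple_swap hπk hπx₀)

lemma isAlgebraic_of_isAlgebraic_generator (hx₀ : IsAlgebraic A x₀) {x : V}
    (hx : IsAlgebraic K x) : IsAlgebraic A x :=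
  isAlgebraic_of_forall_isAlgebraic (isAlgebraic_coe_closure_singleton hx₀)
    (isAlgebraic_closure_singleton_of_finiteDimensional_span x₀ hx)

lemma exists_finiteDimensional_submodule_ge (hx₀ : IsAlgebraic A x₀) :
    ∃ W : Submodule A V, FiniteDimensional A W ∧ (K : Set V) ⊆ W := by
  obtain ⟨w, hwK, hw⟩ := (Submodule.fg_span_iff_fg_span_finset_subset (K : Set V)).1
    (Module.Finite.iff_fg.1 ‹FiniteDimensional (Subfield.closure {x₀}) _›)
  let S : Set V := insert x₀ w
  have hS (x : V) (hx : x ∈ S) : IsIntegral A x := by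
    obtain rfl | hxw := hx
    · exact hx₀.isIntegral
    · exact (isAlgebraic_of_isAlgebraic_generator hx₀
        (isAlgebraic_algebraMap (⟨x, hwK hxw⟩ : K))).isIntegral
  have : Finite S := w.finite_toSet.insert _
  have hle : Subfield.closure {x₀} ≤ (adjoin A S).toSubfield := by
    rw [Subfield.closure_le, Set.singleton_subset_iff]
    exact subset_adjoin _ _ (Set.mem_insert _ _)
  refine ⟨Subalgebra.toSubmodule (adjoin A S).toSubalgebra, finiteDimensional_adjoin hS,
    fun x hx => ?_⟩
  have hxw : x ∈ Submodule.span (Subfield.closure {x₀}) (w : Set V) :=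
    hw ▸ Submodule.subset_span hx
  clear hx
  induction hxw using Submodule.span_induction with
  | mem x hx => exact subset_adjoin _ _ (Set.mem_insert_of_mem _ hx)
  | zero => exact zero_mem _
  | add x y _ _ hx hy => exact add_mem hx hy
  | smul a x _ hx => exact (adjoin A S).mul_mem (hle a.2) hx

end FunctionField

end AlgebraicDependence

section AutomaticSequences

lemma isKAutomatic_comp_pi {α β ι : Type*} [Finite ι] {k : ℕ} {c : ι → ℕ → α}
    (hc : ∀ i, IsKAutomatic k (c i)) (Φ : (ι → α) → β) :
    IsKAutomatic k fun n => Φ fun i => c i n := by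
  refine ((Set.Finite.pi' hc).image fun d n => Φ fun i => d i n).subset ?_
  rintro _ ⟨i, j, hj, rfl⟩
  exact ⟨fun l n => c l (n * k ^ i + j), fun l => ⟨i, j, hj, rfl⟩, rfl⟩

variable {α : Type*} {k : ℕ} {b : ℕ → α}

lemma isKAutomatic_comp (hb : IsKAutomatic k b) {β : Type*} (f : α → β) :
    IsKAutomatic k fun n => f (b n) :=
  isKAutomatic_comp_pi (ι := Unit) (fun _ => hb) fun d => f (d ())

lemma finite_range_of_isKAutomatic (hk : 1 < k) (hb : IsKAutomatic k b) :
    (Set.range b).Finite := by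
  refine (hb.image fun c => c 0).subset ?_
  rintro _ ⟨n, rfl⟩
  exact ⟨fun m => b (m * k ^ n + n), ⟨n, n, Nat.lt_pow_self hk, rfl⟩, by simp⟩

lemma exists_finite_decimation_closed (hb : IsKAutomatic k b) :
    ∃ S : Set (ℕ → α), S.Finite ∧ b ∈ S ∧ (∀ c ∈ S, ∀ n, c n ∈ Set.range b) ∧
      ∀ c ∈ S, ∀ r < k, (fun n => c (n * k + r)) ∈ S := by
  refine ⟨_, hb, ⟨0, 0, by simp, by simp⟩, ?_, ?_⟩
  · rintro _ ⟨i, j, -, rfl⟩ n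
    exact ⟨_, rfl⟩
  · rintro _ ⟨i, j, hj, rfl⟩ r hr
    refine ⟨i + 1, r * k ^ i + j, ?_, funext fun n => congrArg b (by ring)⟩
    calc r * k ^ i + j < (r + 1) * k ^ i := by linarith
      _ ≤ k * k ^ i := Nat.mul_le_mul_right _ hr
      _ = k ^ (i + 1) := (pow_succ' k i).symm

lemma isKAutomatic_ite_eq_zero (hk : 1 < k) (x y : α) :
    IsKAutomatic k fun n => if n = 0 then x else y := by
  refine (Set.toFinite {fun n : ℕ => if n = 0 then x else y, fun _ => y}).subset ?_
  rintro _ ⟨i, j, -, rfl⟩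
  have hk0 : k ≠ 0 := by lia
  obtain rfl | hj := eq_or_ne j 0
  · simp [hk0]
  · simp [hj]

end AutomaticSequences

section AutomaticSeries

lemma isAlgebraic_of_mem_span_pow {F V ι : Type*} [Field F] [Field V] [Algebra F V] [Finite ι]
    (p : ℕ) [Fact p.Prime] [CharP V p] {g : ι → V}
    (hg : ∀ i, g i ∈ Submodule.span F (Set.range fun j => g j ^ p)) (i : ι) :
    IsAlgebraic F (g i) := by
  let _ := Fintype.ofFinite ι
  let W (k : ℕ) : Submodule F V := Submodule.span F (Set.range fun j => g j ^ p ^ k)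
  have W_mono : Monotone W := by
    refine monotone_nat_of_le_succ fun k => Submodule.span_le.2 ?_
    rintro _ ⟨j, rfl⟩
    obtain ⟨c, hc⟩ := (Submodule.mem_span_range_iff_exists_fun F).1 (hg j)
    simp only [← hc, sum_pow_char_pow, smul_pow, ← pow_mul, ← pow_succ']
    exact Submodule.sum_mem _ fun l _ =>
      Submodule.smul_mem _ _ (Submodule.subset_span ⟨l, rfl⟩)
  by_contra hgi
  let n := Fintype.card ι
  let powers (k : Fin (n + 1)) : W n :=
    ⟨g i ^ p ^ (k : ℕ), W_mono (Nat.lt_succ_iff.1 k.2) (Submodule.subset_span ⟨i, rfl⟩)⟩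
  have hpow_inj : Function.Injective fun k : Fin (n + 1) => p ^ (k : ℕ) :=
    (Nat.pow_right_injective (Fact.out : p.Prime).two_le).comp Fin.val_injective
  have hpowers : LinearIndependent F powers :=
    .of_comp (W n).subtype ((linearIndependent_pow_of_transcendental hgi).comp _ hpow_inj)
  have : Module.Finite F (W n) := .span_of_finite F (Set.finite_range _)
  have hcard := hpowers.fintype_card_le_finrank.trans (finrank_range_le_card _)
  simp [n] at hcard

variable {p : ℕ} [Fact p.Prime] [CharP Kv p] [CompleteSpace Kv] {π : Kv}

lemma digitSeries_eq_sum_mul_pow_char (hπ : Valued.v π < 1) {c : ℕ → Kv}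
    (hc : ∀ n, Valued.v (c n) ≤ 1) (hcp : ∀ n, c n ^ p = c n) :
    digitSeries π c = ∑ r : ZMod p, π ^ r.val * digitSeries π (fun n => c (n * p + r.val)) ^ p := by
  rw [digitSeries, Nat.sumByResidueClasses (summable_mul_pow_of_valuation_le_one hπ hc) p]
  refine Finset.sum_congr rfl fun r _ => ?_
  have hfrob : HasSum (fun n => (c (n * p + r.val) * π ^ n) ^ p)
      (digitSeries π (fun n => c (n * p + r.val)) ^ p) :=
    (summable_mul_pow_of_valuation_le_one hπ fun n => hc (n * p + r.val)).hasSum.map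
      (frobenius Kv p) (continuous_pow p)
  rw [← hfrob.tsum_eq, ← tsum_mul_left]
  refine tsum_congr fun n => ?_
  rw [mul_pow, hcp, add_comm r.val, mul_comm p n, pow_add, pow_mul]
  ring

variable {F : Type*} [Field F] [Algebra F Kv]

lemma isAlgebraic_digitSeries_of_pow_char_eq (hπ : Valued.v π < 1) (hπF : IsAlgebraic F π)
    {b : ℕ → Kv} (hb : ∀ n, Valued.v (b n) ≤ 1) (hbp : ∀ n, b n ^ p = b n)
    (hauto : IsKAutomatic p b) : IsAlgebraic F (digitSeries π b) := by
  let L := algebraicClosure F Kv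
  let πL : L := ⟨π, mem_algebraicClosure_iff.2 hπF⟩
  obtain ⟨S, hS, hbS, hSrange, hSdec⟩ := exists_finite_decimation_closed hauto
  have := hS.to_subtype
  let g (c : S) : Kv := digitSeries π c
  suffices hg : ∀ c, g c ∈ Submodule.span L (Set.range fun d => g d ^ p) from
    (isAlgebraic_of_mem_span_pow p hg ⟨b, hbS⟩).restrictScalars F
  rintro ⟨c, hcS⟩
  have hc (n : ℕ) : Valued.v (c n) ≤ 1 ∧ c n ^ p = c n := by
    obtain ⟨m, hm⟩ := hSrange c hcS n
    exact hm ▸ ⟨hb m, hbp m⟩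
  simp only [g]
  rw [digitSeries_eq_sum_mul_pow_char hπ (fun n => (hc n).1) fun n => (hc n).2]
  exact Submodule.sum_mem _ fun r _ => Submodule.smul_mem _ (πL ^ r.val)
    (Submodule.subset_span ⟨⟨_, hSdec c hcS r.val r.val_lt⟩, rfl⟩)

lemma isAlgebraic_digitSeries_of_isKAutomatic (hπ : Valued.v π < 1) (hπF : IsAlgebraic F π)
    {b : ℕ → Kv} (hb : ∀ n, Valued.v (b n) ≤ 1) (hbF : ∀ n, IsAlgebraic F (b n))
    (hauto : IsKAutomatic p b) : IsAlgebraic F (digitSeries π b) := by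
  classical
  have hp := (Fact.out : p.Prime)
  let digits := (finite_range_of_isKAutomatic hp.one_lt hauto).toFinset
  have mem_digits {γ : Kv} : γ ∈ digits ↔ ∃ n, b n = γ := by simp [digits]
  let indicator (γ : Kv) (n : ℕ) : Kv := if b n = γ then 1 else 0
  have indicator_le_one (γ : Kv) (n : ℕ) : Valued.v (indicator γ n) ≤ 1 := by
    by_cases h : b n = γ <;> simp [indicator, h]
  have hsum : digitSeries π b = ∑ γ ∈ digits, γ * digitSeries π (indicator γ) := by
    have hb_eq : b = fun n => ∑ γ ∈ digits, γ * indicator γ n :=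
      funext fun n => by simp [indicator, mem_digits]
    conv_lhs => rw [hb_eq]
    rw [digitSeries_sum hπ]
    · simp only [digitSeries_mul_left]
    · intro γ hγ n
      obtain ⟨m, rfl⟩ := mem_digits.1 hγ
      exact (map_mul Valued.v _ _).trans_le (mul_le_one' (hb m) (indicator_le_one _ _))
  rw [hsum]
  refine Finset.sum_induction _ (IsAlgebraic F) (fun _ _ => .add) isAlgebraic_zero fun γ hγ => ?_
  obtain ⟨m, rfl⟩ := mem_digits.1 hγ
  refine (hbF m).mul (isAlgebraic_digitSeries_of_pow_char_eq hπ hπF (indicator_le_one _)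
    (fun n => ?_) (isKAutomatic_comp hauto fun γ => if γ = b m then 1 else 0))
  by_cases h : b n = b m <;> simp [indicator, h, hp.ne_zero]

end AutomaticSeries

section AlgebraicSeries

open LaurentSeries PowerSeries
open scoped RatFunc Polynomial

variable {p : ℕ} [Fact p.Prime]

lemma isKAutomatic_of_isAlgebraic_algebraMap {c : ℕ → ZMod p}
    (hc : IsAlgebraic (RatFunc (ZMod p)) (algebraMap (ZMod p)⟦X⟧ (ZMod p)⸨X⸩ (.mk c))) :
    IsKAutomatic p c := by
  have : IsScalarTower (ZMod p)[X] (ZMod p)⟦X⟧ (ZMod p)⸨X⸩ := .of_algebraMap_eq fun _ => rfl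
  rw [← IsFractionRing.isAlgebraic_iff (ZMod p)[X],
    isAlgebraic_algebraMap_iff (IsFractionRing.injective (ZMod p)⟦X⟧ (ZMod p)⸨X⸩)] at hc
  simpa only [coeff_mk] using isKAutomatic_coeff_of_isAlgebraic hc

lemma isKAutomatic_of_isAlgebraic_digitSeries [Algebra (ZMod p) Kv] [CompleteSpace Kv]
    [Algebra (ZMod p)⸨X⸩ Kv] [Algebra (RatFunc (ZMod p)) Kv]
    [IsScalarTower (RatFunc (ZMod p)) (ZMod p)⸨X⸩ Kv] {π : Kv} {hπ : Valued.v π < 1} {hπ0 : π ≠ 0}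
    (hM : algebraMap (ZMod p)⸨X⸩ Kv = laurentSeriesEval hπ hπ0) {G : Submodule (ZMod p) Kv}
    [Module.Finite (ZMod p) G] (hG : IsCompleteSetOfReps π (G : Set Kv))
    (hGalg : ∀ γ ∈ G, IsAlgebraic (RatFunc (ZMod p)) γ) {b : ℕ → Kv} (hb : ∀ n, b n ∈ G)
    (hx : IsAlgebraic (RatFunc (ZMod p)) (digitSeries π b)) : IsKAutomatic p b := by
  let e := Module.finBasis (ZMod p) G
  have : ExpChar (RatFunc (ZMod p)) p := .prime Fact.out
  have hcoord (i) : IsKAutomatic p fun n => e.repr ⟨b n, hb n⟩ i := by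
    refine isKAutomatic_of_isAlgebraic_algebraMap ?_
    rw [← digitBasis_repr_digitSeries hM hG e fun n => ⟨b n, hb n⟩]
    exact isAlgebraic_repr_of_isAlgebraic p
      (fun m => finite_and_ringHomDegree_iterateFrobenius_ratFunc_le p m) (digitBasis hM hG e)
      (fun i => digitBasis_apply hM hG e i ▸ hGalg _ (e i).2) hx i
  simpa only [e.sum_repr] using isKAutomatic_comp_pi hcoord fun d => ((∑ i, d i • e i : G) : Kv)

end AlgebraicSeries

section PropertyB

lemma digitSeries_eq_of_isExpansion {π x : Kv} (hπ0 : π ≠ 0) {Γ : Set Kv} {m : ℤ} {a : ℤ → Kv}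
    (h : IsExpansion π Γ m a x) : x = π ^ m * digitSeries π fun n => a (m + n) := by
  rw [← h.2.tsum_eq, digitSeries, ← tsum_mul_left]
  refine tsum_congr fun n => ?_
  rw [zpow_add₀ hπ0, zpow_natCast, mul_left_comm]

lemma isExpansion_mul_zpow {π γ : Kv} {Γ : Set Kv} (h0 : 0 ∈ Γ) (hγ : γ ∈ Γ) (m : ℤ) :
    IsExpansion π Γ m (fun n => if n = m then γ else 0) (γ * π ^ m) := by
  refine ⟨fun n _ => ?_, ?_⟩
  · dsimp only
    split_ifs <;> assumption
  · convert hasSum_single 0 fun n (hn : n ≠ 0) => ?_ using 1 <;> simp [*]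

variable {p : ℕ} [Fact p.Prime] {K : Subfield Kv} {π : Kv} {Γ : Set Kv}

lemma isAlgebraic_mul_zpow_of_hasPropertyB (hB : HasPropertyB p K π Γ) (h0 : 0 ∈ Γ) {γ : Kv}
    (hγ : γ ∈ Γ) (m : ℤ) : IsAlgebraic K (γ * π ^ m) := by
  refine (hB _ m _ (isExpansion_mul_zpow h0 hγ m)).2 ?_
  simpa using isKAutomatic_ite_eq_zero (Fact.out : p.Prime).one_lt γ 0

lemma isAlgebraic_of_hasPropertyB (hB : HasPropertyB p K π Γ) (h0 : 0 ∈ Γ)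
    (hΓ : IsCompleteSetOfReps π Γ) (hπ : Valued.v π < 1) :
    IsAlgebraic K π ∧ ∀ γ ∈ Γ, IsAlgebraic K γ := by
  have hΓK (γ : Kv) (hγ : γ ∈ Γ) : IsAlgebraic K γ := by
    simpa using isAlgebraic_mul_zpow_of_hasPropertyB hB h0 hγ 0
  refine ⟨?_, hΓK⟩
  obtain ⟨γ, ⟨hγ, hγ1⟩, -⟩ := hΓ.2 1 (by simp)
  have hγ0 : γ ≠ 0 := by
    rintro rfl
    rw [sub_zero, map_one] at hγ1
    exact hγ1.not_gt hπ
  have hγπ : IsAlgebraic K (γ * π) := by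
    simpa using isAlgebraic_mul_zpow_of_hasPropertyB hB h0 hγ 1
  simpa [hγ0] using (hΓK γ hγ).inv.mul hγπ

lemma isAlgebraic_iff_isAlgebraic_digitSeries (hπ0 : π ≠ 0) (hπK : IsAlgebraic K π) {x : Kv}
    {m : ℤ} {a : ℤ → Kv} (h : IsExpansion π Γ m a x) :
    IsAlgebraic K x ↔ IsAlgebraic K (digitSeries π fun n => a (m + n)) := by
  have hπm : π ^ m ∈ algebraicClosure K Kv := zpow_mem (mem_algebraicClosure_iff.2 hπK) m
  rw [← mem_algebraicClosure_iff, ← mem_algebraicClosure_iff, digitSeries_eq_of_isExpansion hπ0 h]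
  refine ⟨fun h => ?_, mul_mem hπm⟩
  simpa only [inv_mul_cancel_left₀ (zpow_ne_zero m hπ0)] using mul_mem (inv_mem hπm) h

open LaurentSeries
open scoped RatFunc

variable [CompleteSpace Kv] [Algebra (ZMod p) Kv] {G : Submodule (ZMod p) Kv}

lemma isKAutomatic_of_isAlgebraic_of_globalFunctionField (x₀ : Kv)
    [FiniteDimensional (Subfield.closure {x₀})
      (Submodule.span (Subfield.closure {x₀}) (K : Set Kv))]
    (hK : Dense (K : Set Kv)) (hπ : Valued.v π < 1) (hπ0 : π ≠ 0) (hπK : IsAlgebraic K π)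
    (hG : IsCompleteSetOfReps π (G : Set Kv)) (hGK : ∀ γ ∈ G, IsAlgebraic K γ) {b : ℕ → Kv}
    (hb : ∀ n, b n ∈ G) (hx : IsAlgebraic K (digitSeries π b)) : IsKAutomatic p b := by
  let _ : Algebra (ZMod p)⸨X⸩ Kv := (laurentSeriesEval hπ hπ0).toAlgebra
  let _ : Algebra (RatFunc (ZMod p)) Kv :=
    ((laurentSeriesEval hπ hπ0).comp (algebraMap (RatFunc (ZMod p)) (ZMod p)⸨X⸩)).toAlgebra
  have : IsScalarTower (RatFunc (ZMod p)) (ZMod p)⸨X⸩ Kv := .of_algebraMap_eq fun _ => rfl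
  have : IsScalarTower (ZMod p) (RatFunc (ZMod p)) Kv :=
    .of_algebraMap_eq' (Subsingleton.elim _ _)
  have hX : algebraMap (RatFunc (ZMod p)) Kv .X = π := by
    change laurentSeriesEval hπ hπ0 (algebraMap (RatFunc (ZMod p)) (ZMod p)⸨X⸩ .X) = π
    rw [RatFunc.coe_X, ← PowerSeries.coe_X, ← LaurentSeries.coe_algebraMap,
      laurentSeriesEval_algebraMap, powerSeriesEval_X]
  have hx₀ : IsAlgebraic (RatFunc (ZMod p)) x₀ :=
    isAlgebraic_generator (ZMod p) (transcendental_zmod p hπ hπ0)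
      (hX ▸ isAlgebraic_algebraMap _) hπK
  obtain ⟨W, _, hKW⟩ := exists_finiteDimensional_submodule_ge (K := K) hx₀
  have : Module.Finite (ZMod p) G := finite_of_dense rfl hG (hK.mono hKW)
  exact isKAutomatic_of_isAlgebraic_digitSeries rfl hG
    (fun γ hγ => isAlgebraic_of_isAlgebraic_generator hx₀ (hGK γ hγ)) hb
    (isAlgebraic_of_isAlgebraic_generator hx₀ hx)

end PropertyB

/-- **Theorem 3.5.** Suppose `Γ` is additively closed.  Then `(Γ, π)` has
property B if and only if `π` and all elements of `Γ` are algebraic over `K`. -/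
theorem propertyB_iff_algebraic_of_addClosed
    {Kv : Type*} [Field Kv] [Valued Kv ZM0]
    (p : ℕ) [Fact p.Prime] (K : Subfield Kv)
    (hK : IsGlobalFunctionFieldCompletion p K)
    (π : Kv) (hπ0 : π ≠ 0) (hπ : Valued.v π < 1)
    (Γ : Set Kv) (hΓ : IsCompleteSetOfReps π Γ)
    (hadd : ∀ μ ∈ Γ, ∀ ν ∈ Γ, μ + ν ∈ Γ) :
    HasPropertyB p K π Γ ↔ (IsAlgebraic ↥K π ∧ ∀ γ ∈ Γ, IsAlgebraic ↥K γ) := by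
  have := hK.charP
  have := hK.complete
  let _ : Algebra (ZMod p) Kv := ZMod.algebra Kv p
  have hne : Γ.Nonempty := (hΓ.2 0 (by simp)).exists.imp fun _ h => h.1
  obtain ⟨G, rfl⟩ := exists_submodule_coe_eq_of_add_mem p hne hadd
  refine ⟨fun hB => isAlgebraic_of_hasPropertyB hB G.zero_mem hΓ hπ, ?_⟩
  rintro ⟨hπK, hGK⟩ x m a hexp
  obtain ⟨x₀, -, -, hdeg⟩ := hK.globalFunctionField
  have := Module.rank_lt_aleph0_iff.1 hdeg
  have hdigit (n : ℕ) : a (m + n) ∈ G := hexp.1 _ (by lia)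
  rw [isAlgebraic_iff_isAlgebraic_digitSeries hπ0 hπK hexp]
  exact ⟨isKAutomatic_of_isAlgebraic_of_globalFunctionField x₀ hK.dense hπ hπ0 hπK hΓ hGK hdigit,
    isAlgebraic_digitSeries_of_isKAutomatic hπ hπK (fun n => hΓ.1 _ (hdigit n))
      fun n => hGK _ (hdigit n)⟩
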